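/- arXiv:2205.06864 — 2 statements merged into one kernel-verified Lean document; each statement's English description precedes it below -/
import Mathlib

section
/- Let X be a doubling metric measure space (every closed ball of positive radius having positive finite measure) and F ⊆ L^p(X) relatively compact, 1 ≤ p < ∞. Then for every ε > 0 there exists δ > 0 such that for all f ∈ F and all r ∈ (0,δ), ‖A_r f − f‖_p < ε. -/
open MeasureTheory Metric
open scoped ENNReal

/-- The average function `A_r f (x) = μ(B(x,r))⁻¹ ∫_{B(x,r)} f dμ`. -/
noncomputable def avg {X : Type*} [MeasurableSpace X] [MetricSpace X]
    (μ : Measure X) (r : ℝ) (f : X → ℝ) (x : X) : ℝ :=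
  (μ (closedBall x r)).toReal⁻¹ * ∫ y in closedBall x r, f y ∂μ

open Filter Topology

theorem aux_sigmaFinite {X : Type*} [MetricSpace X] [MeasurableSpace X] [BorelSpace X]
    (μ : Measure X)
    (hball : ∀ (x : X) (r : ℝ), 0 < r → μ (closedBall x r) ≠ 0 ∧ μ (closedBall x r) ≠ ⊤)
    (x0 : X) : SigmaFinite μ := by
  refine ⟨⟨⟨fun n => closedBall x0 ((n : ℝ) + 1), fun _ => trivial,
    fun n => (hball x0 _ (by positivity)).2.lt_top, ?_⟩⟩⟩
  refine Set.eq_univ_of_forall fun x => Set.mem_iUnion.2 ?_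
  obtain ⟨n, hn⟩ := exists_nat_ge (dist x x0)
  exact ⟨n, mem_closedBall.2 (by linarith)⟩

theorem aux_secondCountable {X : Type*} [MetricSpace X] [MeasurableSpace X] [BorelSpace X]
    (μ : Measure X)
    (hball : ∀ (x : X) (r : ℝ), 0 < r → μ (closedBall x r) ≠ 0 ∧ μ (closedBall x r) ≠ ⊤)
    (x0 : X) : SecondCountableTopology X := by
  have := aux_sigmaFinite μ hball x0
  refine Metric.secondCountable_of_almost_dense_set fun ε hε => ?_
  obtain ⟨u, -, hu, hcov⟩ := Vitali.exists_disjoint_subfamily_covering_enlargement_closedBall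
    (Set.univ : Set X) id (fun _ => ε / 5) (ε / 5) (fun _ _ => le_rfl) 5 (by norm_num)
  refine ⟨u, ?_, fun x => ?_⟩
  · have h := Measure.countable_meas_pos_of_disjoint_iUnion (μ := μ)
      (As := fun i : u => closedBall (i : X) (ε / 5)) (fun _ => isClosed_closedBall.measurableSet)
      (fun i j hij => hu i.2 j.2 (fun h => hij (Subtype.ext h)))
    have h2 : {i : u | 0 < μ (closedBall (i : X) (ε / 5))} = Set.univ :=
      Set.eq_univ_of_forall fun i => pos_iff_ne_zero.2 (hball _ _ (by positivity)).1
    rw [h2] at h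
    exact Set.countable_coe_iff.1 (Set.countable_univ_iff.1 h)
  · obtain ⟨b, hb, hs⟩ := hcov x (Set.mem_univ _)
    refine ⟨b, hb, ?_⟩
    have := hs (mem_closedBall_self (by positivity))
    simpa [mem_closedBall, mul_div_cancel₀] using this

theorem aux_dominated {X ι : Type*} [MeasurableSpace X] {μ : Measure X} {l : Filter ι}
    [l.IsCountablyGenerated] {p : ℝ≥0∞} (hp : 1 ≤ p) (hp' : p ≠ ⊤)
    (f : ι → X → ℝ) (g : X → ℝ) (hg : MemLp g p μ)
    (hm : ∀ i, AEStronglyMeasurable (f i) μ)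
    (hb : ∀ᶠ i in l, ∀ᵐ x ∂μ, ‖f i x‖ ≤ ‖g x‖)
    (hlim : ∀ᵐ x ∂μ, Tendsto (fun i => f i x) l (𝓝 0)) :
    Tendsto (fun i => eLpNorm (f i) p μ) l (𝓝 0) := by
  have hp0 : p ≠ 0 := (zero_lt_one.trans_le hp).ne'
  have hpp : 0 < p.toReal := ENNReal.toReal_pos hp0 hp'
  simp_rw [eLpNorm_eq_lintegral_rpow_enorm_toReal hp0 hp']
  have key : Tendsto (fun i => ∫⁻ x, ‖f i x‖ₑ ^ p.toReal ∂μ) l (𝓝 (∫⁻ x, 0 ∂μ)) := by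
    refine tendsto_lintegral_filter_of_dominated_convergence' (fun x => ‖g x‖ₑ ^ p.toReal)
      (Eventually.of_forall fun i => (hm i).enorm.pow_const _) ?_ ?_ ?_
    · filter_upwards [hb] with i hi
      filter_upwards [hi] with x hx
      gcongr
      exact enorm_le_iff_norm_le.2 hx
    · exact (lintegral_rpow_enorm_lt_top_of_eLpNorm_lt_top hp0 hp' hg.2).ne
    · filter_upwards [hlim] with x hx
      have := (ENNReal.continuous_rpow_const (y := p.toReal)).tendsto 0 |>.comp
        (by simpa using hx.enorm)
      simpa [ENNReal.zero_rpow_of_pos hpp, Function.comp_def] using this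
  have := (ENNReal.continuous_rpow_const (y := 1 / p.toReal)).tendsto 0 |>.comp
    (by simpa using key)
  simpa [ENNReal.zero_rpow_of_pos (inv_pos.2 hpp), Function.comp_def] using this

theorem aux_avg_eq {X : Type*} [MetricSpace X] [MeasurableSpace X]
    (μ : Measure X) (r : ℝ) (f : X → ℝ) (x : X) :
    avg μ r f x = ⨍ y in closedBall x r, f y ∂μ := by
  rw [setAverage_eq]; rfl

theorem aux_measSet {X : Type*} [MetricSpace X] [MeasurableSpace X] [BorelSpace X]
    [SecondCountableTopology X] (r : ℝ) :
    MeasurableSet {q : X × X | q.2 ∈ closedBall q.1 r} := by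
  refine IsClosed.measurableSet ?_
  exact isClosed_le (f := fun q : X × X => dist q.2 q.1) (g := fun _ => r) (by fun_prop) (by fun_prop)

theorem aux_measBall {X : Type*} [MetricSpace X] [MeasurableSpace X] [BorelSpace X]
    [SecondCountableTopology X] (μ : Measure X) [SFinite μ] (r : ℝ) :
    Measurable (fun x => μ (closedBall x r)) :=
  measurable_measure_prodMk_left (aux_measSet (X := X) r)

theorem aux_avg_meas {X : Type*} [MetricSpace X] [MeasurableSpace X] [BorelSpace X]
    [SecondCountableTopology X] (μ : Measure X) [SFinite μ] (r : ℝ) (f : X → ℝ)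
    (hf : StronglyMeasurable f) : StronglyMeasurable (avg μ r f) := by
  have h1 : StronglyMeasurable (fun x => ∫ y in closedBall x r, f y ∂μ) := by
    have : (fun x => ∫ y in closedBall x r, f y ∂μ) =
        fun x => ∫ y, ({q : X × X | q.2 ∈ closedBall q.1 r}.indicator (fun q => f q.2)) (x, y) ∂μ := by
      funext x
      rw [← integral_indicator isClosed_closedBall.measurableSet]
      rfl
    rw [this]
    exact ((hf.comp_measurable measurable_snd).indicator (aux_measSet r)).integral_prod_right'
  exact ((aux_measBall μ r).ennreal_toReal.inv.stronglyMeasurable).mul h1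

theorem aux_jensen {X : Type*} [MetricSpace X] [MeasurableSpace X] [BorelSpace X]
    (μ : Measure X)
    (hball : ∀ (x : X) (r : ℝ), 0 < r → μ (closedBall x r) ≠ 0 ∧ μ (closedBall x r) ≠ ⊤)
    {p : ℝ≥0∞} (hp : 1 ≤ p) (hp' : p ≠ ⊤) (r : ℝ) (hr : 0 < r) (f : X → ℝ)
    (hf : StronglyMeasurable f) (x : X) :
    ‖avg μ r f x‖ₑ ^ p.toReal ≤
      (μ (closedBall x r))⁻¹ * ∫⁻ y in closedBall x r, ‖f y‖ₑ ^ p.toReal ∂μ := by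
  have hp0 : p ≠ 0 := (zero_lt_one.trans_le hp).ne'
  have hpp : 0 < p.toReal := ENNReal.toReal_pos hp0 hp'
  set ν : Measure X := (μ (closedBall x r))⁻¹ • μ.restrict (closedBall x r) with hν
  have : IsProbabilityMeasure ν := ⟨by
    simp [hν, ENNReal.inv_mul_cancel (hball x r hr).1 (hball x r hr).2]⟩
  have h1 : avg μ r f x = ∫ y, f y ∂ν := by
    rw [hν, integral_smul_measure, ENNReal.toReal_inv]; rfl
  have h2 : ‖avg μ r f x‖ₑ ≤ eLpNorm f p ν := by
    rw [h1]
    refine (enorm_integral_le_lintegral_enorm _).trans ?_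
    rw [← eLpNorm_one_eq_lintegral_enorm]
    exact eLpNorm_le_eLpNorm_of_exponent_le hp hf.aestronglyMeasurable
  calc _ ≤ (eLpNorm f p ν) ^ p.toReal := by gcongr
    _ = ∫⁻ y, ‖f y‖ₑ ^ p.toReal ∂ν := by
      rw [eLpNorm_eq_lintegral_rpow_enorm_toReal hp0 hp', ← ENNReal.rpow_mul,
        one_div_mul_cancel hpp.ne', ENNReal.rpow_one]
    _ = _ := by rw [hν, lintegral_smul_measure]; rfl

theorem aux_bound {X : Type*} [MetricSpace X] [MeasurableSpace X] [BorelSpace X]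
    [SecondCountableTopology X] (μ : Measure X) [SFinite μ]
    (hball : ∀ (x : X) (r : ℝ), 0 < r → μ (closedBall x r) ≠ 0 ∧ μ (closedBall x r) ≠ ⊤)
    (γ : ℝ)
    (hdbl : ∀ (x : X) (r : ℝ), 0 < r →
      μ (closedBall x (2 * r)) ≤ ENNReal.ofReal γ * μ (closedBall x r))
    {p : ℝ≥0∞} (hp : 1 ≤ p) (hp' : p ≠ ⊤) (r : ℝ) (hr : 0 < r) (f : X → ℝ)
    (hf : StronglyMeasurable f) :
    eLpNorm (avg μ r f) p μ ≤ (ENNReal.ofReal γ) ^ (1 / p.toReal) * eLpNorm f p μ := by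
  have hp0 : p ≠ 0 := (zero_lt_one.trans_le hp).ne'
  have hpp : 0 < p.toReal := ENNReal.toReal_pos hp0 hp'
  rw [eLpNorm_eq_lintegral_rpow_enorm_toReal hp0 hp', eLpNorm_eq_lintegral_rpow_enorm_toReal hp0 hp',
    ← ENNReal.mul_rpow_of_nonneg _ _ (by positivity)]
  gcongr
  have hfm : Measurable (fun y => ‖f y‖ₑ ^ p.toReal) := hf.enorm.pow_const _
  let K : X → X → ℝ≥0∞ := fun x y =>
    {q : X × X | q.2 ∈ closedBall q.1 r}.indicator
      (fun q => (μ (closedBall q.1 r))⁻¹ * ‖f q.2‖ₑ ^ p.toReal) (x, y)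
  have hK : Measurable (Function.uncurry K) := by
    refine Measurable.indicator ?_ (aux_measSet r)
    exact (((aux_measBall μ r).comp measurable_fst).inv).mul (hfm.comp measurable_snd)
  calc ∫⁻ x, ‖avg μ r f x‖ₑ ^ p.toReal ∂μ
      ≤ ∫⁻ x, ∫⁻ y, K x y ∂μ ∂μ := by
        refine lintegral_mono fun x => (aux_jensen μ hball hp hp' r hr f hf x).trans ?_
        rw [← lintegral_const_mul _ hfm, ← lintegral_indicator isClosed_closedBall.measurableSet]
        exact le_of_eq rfl
    _ = ∫⁻ y, ∫⁻ x, K x y ∂μ ∂μ := lintegral_lintegral_swap hK.aemeasurable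
    _ ≤ ∫⁻ y, ENNReal.ofReal γ * ‖f y‖ₑ ^ p.toReal ∂μ := by
        refine lintegral_mono fun y => ?_
        have hy := hball y r hr
        calc ∫⁻ x, K x y ∂μ
            ≤ ∫⁻ x, (closedBall y r).indicator (fun _ =>
              (ENNReal.ofReal γ * (μ (closedBall y r))⁻¹) * ‖f y‖ₑ ^ p.toReal) x ∂μ := by
              refine lintegral_mono fun x => ?_
              by_cases hxy : dist y x ≤ r
              · have e1 : K x y = (μ (closedBall x r))⁻¹ * ‖f y‖ₑ ^ p.toReal :=
                  Set.indicator_of_mem (show (x, y) ∈ {q : X × X | q.2 ∈ closedBall q.1 r} from hxy) _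
                rw [e1, Set.indicator_of_mem (mem_closedBall'.2 hxy)]
                gcongr
                have hx := hball x r hr
                have hsub : μ (closedBall y r) ≤ ENNReal.ofReal γ * μ (closedBall x r) :=
                  (measure_mono (closedBall_subset_closedBall' (by linarith))).trans (hdbl x r hr)
                rw [← div_eq_mul_inv, ENNReal.le_div_iff_mul_le (Or.inl hy.1) (Or.inl hy.2), mul_comm,
                  ← div_eq_mul_inv]
                exact ENNReal.div_le_of_le_mul hsub
              · have e1 : K x y = 0 :=
                  Set.indicator_of_notMem (show (x, y) ∉ {q : X × X | q.2 ∈ closedBall q.1 r} from hxy) _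
                rw [e1]; exact zero_le
          _ = _ := by
              rw [lintegral_indicator isClosed_closedBall.measurableSet, setLIntegral_const]
              rw [mul_assoc, mul_assoc, mul_comm (‖f y‖ₑ ^ p.toReal), ← mul_assoc _ (μ _),
                ENNReal.inv_mul_cancel hy.1 hy.2, one_mul]
    _ = _ := lintegral_const_mul _ hfm

theorem aux_approx {X : Type*} [MetricSpace X] [MeasurableSpace X] [BorelSpace X]
    [SecondCountableTopology X] (μ : Measure X) [SFinite μ]
    (hball : ∀ (x : X) (r : ℝ), 0 < r → μ (closedBall x r) ≠ 0 ∧ μ (closedBall x r) ≠ ⊤)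
    (γ : ℝ)
    (hdbl : ∀ (x : X) (r : ℝ), 0 < r →
      μ (closedBall x (2 * r)) ≤ ENNReal.ofReal γ * μ (closedBall x r))
    {p : ℝ≥0∞} (hp : 1 ≤ p) (hp' : p ≠ ⊤) (r : ℝ) (hr : 0 < r) (f g : X → ℝ)
    (hf : StronglyMeasurable f) (hg : StronglyMeasurable g)
    (hfp : MemLp f p μ) (hgp : MemLp g p μ) :
    eLpNorm (fun x => avg μ r f x - f x) p μ ≤
      ((ENNReal.ofReal γ) ^ (1 / p.toReal) + 1) * eLpNorm (f - g) p μ +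
        eLpNorm (fun x => avg μ r g x - g x) p μ := by
  have hint : ∀ h : X → ℝ, MemLp h p μ → ∀ x, IntegrableOn h (closedBall x r) μ := by
    intro h hh x
    have : IsFiniteMeasure (μ.restrict (closedBall x r)) :=
      ⟨by simpa using (hball x r hr).2.lt_top⟩
    exact (hh.restrict _).integrable hp
  have e : (fun x => avg μ r f x - f x) =
      avg μ r (f - g) + (-(f - g) + (fun x => avg μ r g x - g x)) := by
    funext x
    have : avg μ r (f - g) x = avg μ r f x - avg μ r g x := by
      simp only [avg, Pi.sub_apply]
      rw [integral_sub (hint f hfp x) (hint g hgp x)]; ring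
    simp only [Pi.add_apply, Pi.neg_apply, Pi.sub_apply, this]; ring
  have m1 := (aux_avg_meas μ r (f - g) (hf.sub hg)).aestronglyMeasurable (μ := μ)
  have m2 := ((hf.sub hg).neg).aestronglyMeasurable (μ := μ)
  have m3 := ((aux_avg_meas μ r g hg).sub hg).aestronglyMeasurable (μ := μ)
  rw [e]
  refine (eLpNorm_add_le m1 (m2.add m3) hp).trans ?_
  rw [add_mul, one_mul, add_assoc]
  refine add_le_add (aux_bound μ hball γ hdbl hp hp' r hr _ (hf.sub hg)) ?_
  refine (eLpNorm_add_le m2 m3 hp).trans ?_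
  rw [eLpNorm_neg]
  rfl

theorem aux_bdd {X : Type*} [MetricSpace X] [MeasurableSpace X] [BorelSpace X]
    [SecondCountableTopology X] (μ : Measure X) [SFinite μ]
    (hball : ∀ (x : X) (r : ℝ), 0 < r → μ (closedBall x r) ≠ 0 ∧ μ (closedBall x r) ≠ ⊤)
    (γ : ℝ)
    (hdbl : ∀ (x : X) (r : ℝ), 0 < r →
      μ (closedBall x (2 * r)) ≤ ENNReal.ofReal γ * μ (closedBall x r))
    {p : ℝ≥0∞} (hp : 1 ≤ p) (hp' : p ≠ ⊤) (g : X → ℝ) (hg : StronglyMeasurable g)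
    (hgp : MemLp g p μ)
    (x0 : X) (R : ℝ) (hR : 0 < R) (hb : ∀ x, ‖g x‖ ≤ R) (hs : ∀ x, x ∉ closedBall x0 R → g x = 0) :
    Tendsto (fun r => eLpNorm (fun x => avg μ r g x - g x) p μ) (𝓝[>] 0) (𝓝 0) := by
  have : IsUnifLocDoublingMeasure μ := ⟨γ.toNNReal, by
    filter_upwards [self_mem_nhdsWithin] with r hr x using hdbl x r hr⟩
  have : IsLocallyFiniteMeasure μ :=
    ⟨fun x => ⟨closedBall x 1, closedBall_mem_nhds x one_pos, (hball x 1 one_pos).2.lt_top⟩⟩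
  have hloc : LocallyIntegrable g μ := by
    intro x
    refine ⟨closedBall x 1, closedBall_mem_nhds x one_pos, ?_⟩
    have : IsFiniteMeasure (μ.restrict (closedBall x 1)) :=
      ⟨by simpa using (hball x 1 one_pos).2.lt_top⟩
    exact (hgp.restrict _).integrable hp
  refine aux_dominated hp hp' _ ((closedBall x0 (R + 1)).indicator fun _ => 2 * R) ?_
    (fun r => ((aux_avg_meas μ r g hg).sub hg).aestronglyMeasurable) ?_ ?_
  · exact memLp_indicator_const p isClosed_closedBall.measurableSet _
      (Or.inr (hball x0 (R + 1) (by positivity)).2)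
  · filter_upwards [self_mem_nhdsWithin, mem_nhdsWithin_of_mem_nhds (Iio_mem_nhds one_pos)]
      with r hr hr1
    refine Eventually.of_forall fun x => ?_
    have hr0 : 0 < r := hr
    have hr1' : r < 1 := hr1
    by_cases hx : x ∈ closedBall x0 (R + 1)
    · rw [Set.indicator_of_mem hx, Real.norm_of_nonneg (by positivity : 0 ≤ 2 * R), two_mul]
      refine (norm_sub_le _ _).trans (add_le_add ?_ (hb x))
      have hB := hball x r hr0
      have hpos : 0 < (μ (closedBall x r)).toReal := ENNReal.toReal_pos hB.1 hB.2
      have := norm_setIntegral_le_of_norm_le_const (μ := μ) (s := closedBall x r) (f := g) (C := R)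
        hB.2.lt_top (fun y _ => hb y)
      rw [avg, norm_mul, norm_inv, Real.norm_of_nonneg hpos.le, inv_mul_le_iff₀ hpos, mul_comm]
      exact this
    · rw [Set.indicator_of_notMem hx]
      have hx' : R + 1 < dist x x0 := by simpa using hx
      have h1 : g x = 0 := hs x (by simp only [mem_closedBall, not_le]; linarith)
      have h2 : ∫ y in closedBall x r, g y ∂μ = 0 := by
        refine setIntegral_eq_zero_of_forall_eq_zero fun y hy => hs y ?_
        have hy' := mem_closedBall.1 hy
        have := dist_triangle_left x x0 y
        simp only [mem_closedBall, not_le]; linarith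
      simp [avg, h1, h2]
  · filter_upwards [IsUnifLocDoublingMeasure.ae_tendsto_average μ hloc 1] with x hx
    have := hx (l := 𝓝[>] (0 : ℝ)) (fun _ => x) id tendsto_id (by
      filter_upwards [self_mem_nhdsWithin] with r hr
      exact mem_closedBall_self (by simpa using (le_of_lt hr : (0 : ℝ) ≤ r)))
    simpa [aux_avg_eq] using this.sub_const (g x)

theorem aux_single {X : Type*} [MetricSpace X] [MeasurableSpace X] [BorelSpace X]
    [SecondCountableTopology X] (μ : Measure X) [SFinite μ]
    (hball : ∀ (x : X) (r : ℝ), 0 < r → μ (closedBall x r) ≠ 0 ∧ μ (closedBall x r) ≠ ⊤)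
    (γ : ℝ)
    (hdbl : ∀ (x : X) (r : ℝ), 0 < r →
      μ (closedBall x (2 * r)) ≤ ENNReal.ofReal γ * μ (closedBall x r))
    {p : ℝ≥0∞} (hp : 1 ≤ p) (hp' : p ≠ ⊤) (f : X → ℝ) (hf : StronglyMeasurable f)
    (hfp : MemLp f p μ) (x0 : X) :
    Tendsto (fun r => eLpNorm (fun x => avg μ r f x - f x) p μ) (𝓝[>] 0) (𝓝 0) := by
  let S : ℕ → Set X := fun n => closedBall x0 ((n : ℝ) + 1) ∩ {x | ‖f x‖ ≤ (n : ℝ) + 1}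
  have hS : ∀ n, MeasurableSet (S n) := fun n =>
    isClosed_closedBall.measurableSet.inter (measurableSet_le hf.norm.measurable measurable_const)
  let g : ℕ → X → ℝ := fun n => (S n).indicator f
  have hgm : ∀ n, StronglyMeasurable (g n) := fun n => hf.indicator (hS n)
  have hgp : ∀ n, MemLp (g n) p μ := fun n => hfp.indicator (hS n)
  have hconv : Tendsto (fun n => eLpNorm (f - g n) p μ) atTop (𝓝 0) := by
    refine aux_dominated hp hp' _ f hfp (fun n => (hf.sub (hgm n)).aestronglyMeasurable) ?_ ?_
    · refine Eventually.of_forall fun n => Eventually.of_forall fun x => ?_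
      by_cases hx : x ∈ S n <;> simp [g, hx]
    · refine Eventually.of_forall fun x => ?_
      obtain ⟨N, hN⟩ := exists_nat_ge (max (dist x x0) ‖f x‖)
      refine tendsto_const_nhds.congr' ?_
      filter_upwards [eventually_ge_atTop N] with n hn
      have hn' : (N : ℝ) ≤ n := by exact_mod_cast hn
      have hx : x ∈ S n := ⟨mem_closedBall.2 (by linarith [le_max_left (dist x x0) ‖f x‖]),
        show ‖f x‖ ≤ (n : ℝ) + 1 by linarith [le_max_right (dist x x0) ‖f x‖]⟩
      simp [g, hx]
  have hC : (ENNReal.ofReal γ) ^ (1 / p.toReal) + 1 ≠ ⊤ := by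
    simp [ENNReal.rpow_eq_top_iff]
  have hconv2 := ENNReal.Tendsto.const_mul hconv (Or.inr hC)
  rw [mul_zero] at hconv2
  rw [ENNReal.tendsto_nhds_zero]
  intro ε hε
  have hε2 : 0 < ε / 2 := ENNReal.half_pos hε.ne'
  obtain ⟨n, hn⟩ := ((ENNReal.tendsto_nhds_zero.1 hconv2) _ hε2).exists
  have hbd := aux_bdd μ hball γ hdbl hp hp' (g n) (hgm n) (hgp n) x0 ((n : ℝ) + 1) (by positivity)
    (fun x => by
      by_cases hx : x ∈ S n
      · simp only [g, Set.indicator_of_mem hx]; exact hx.2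
      · simp only [g, Set.indicator_of_notMem hx, norm_zero]; positivity)
    (fun x hx => Set.indicator_of_notMem (fun h => hx h.1) _)
  filter_upwards [(ENNReal.tendsto_nhds_zero.1 hbd) _ hε2, self_mem_nhdsWithin] with r h1 hr
  refine (aux_approx μ hball γ hdbl hp hp' r hr f (g n) hf (hgm n) hfp (hgp n)).trans ?_
  exact (add_le_add hn h1).trans (ENNReal.add_halves ε).le

theorem avg_approx_of_relCompact {X : Type*} [MetricSpace X] [MeasurableSpace X] [BorelSpace X]
    (μ : Measure X)
    (hball : ∀ (x : X) (r : ℝ), 0 < r → μ (closedBall x r) ≠ 0 ∧ μ (closedBall x r) ≠ ⊤)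
    (γ : ℝ) (hγ : 1 ≤ γ)
    (hdbl : ∀ (x : X) (r : ℝ), 0 < r →
      μ (closedBall x (2 * r)) ≤ ENNReal.ofReal γ * μ (closedBall x r))
    (p : ℝ≥0∞) [Fact (1 ≤ p)] (hp' : p ≠ ⊤)
    (F : Set (MeasureTheory.Lp ℝ p μ)) (hF : IsCompact (closure F)) :
    ∀ ε : ℝ, 0 < ε → ∃ δ : ℝ, 0 < δ ∧ ∀ f ∈ F, ∀ r : ℝ, 0 < r → r < δ →
      eLpNorm (fun x => avg μ r f x - f x) p μ < ENNReal.ofReal ε := by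
  intro ε hε
  have hp : 1 ≤ p := Fact.out
  rcases isEmpty_or_nonempty X with hX | ⟨⟨x0⟩⟩
  · refine ⟨1, one_pos, fun f _ r _ _ => ?_⟩
    have : μ = 0 := Measure.eq_zero_of_isEmpty μ
    subst this
    simpa using hε
  have := aux_sigmaFinite μ hball x0
  have := aux_secondCountable μ hball x0
  set C : ℝ≥0∞ := (ENNReal.ofReal γ) ^ (1 / p.toReal) + 1 with hCdef
  have hC : C ≠ ⊤ := by simp [hCdef, ENNReal.rpow_eq_top_iff]
  have hC0 : C ≠ 0 := by simp [hCdef]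
  have hE : (0 : ℝ≥0∞) < ENNReal.ofReal ε / 2 := ENNReal.half_pos (by simpa using hε)
  have hη : (0 : ℝ≥0∞) < ENNReal.ofReal ε / 2 / C := ENNReal.div_pos hE.ne' hC
  obtain ⟨t, ht, hcov⟩ := EMetric.totallyBounded_iff.1
    (hF.totallyBounded.subset subset_closure) _ hη
  have hev : ∀ᶠ r in 𝓝[>] (0 : ℝ), ∀ h ∈ t,
      eLpNorm (fun x => avg μ r h x - h x) p μ ≤ ENNReal.ofReal ε / 2 := by
    rw [eventually_all_finite ht]
    intro h _
    exact ENNReal.tendsto_nhds_zero.1 (aux_single μ hball γ hdbl hp hp' h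
      (Lp.stronglyMeasurable h) (Lp.memLp h) x0) _ hE
  obtain ⟨δ, hδ, hsub⟩ := mem_nhdsGT_iff_exists_Ioo_subset.1 hev
  refine ⟨δ, hδ, fun f hf r hr hrδ => ?_⟩
  obtain ⟨h, hht, hfh⟩ := Set.mem_iUnion₂.1 (hcov hf)
  have hfh' : eLpNorm (⇑f - ⇑h) p μ < ENNReal.ofReal ε / 2 / C := by
    rw [← Lp.edist_def]; exact hfh
  refine (aux_approx μ hball γ hdbl hp hp' r hr f h (Lp.stronglyMeasurable f)
    (Lp.stronglyMeasurable h) (Lp.memLp f) (Lp.memLp h)).trans_lt ?_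
  have hr2 := hsub ⟨hr, hrδ⟩ h hht
  rw [← ENNReal.add_halves (ENNReal.ofReal ε)]
  refine ENNReal.add_lt_add_of_lt_of_le ?_ ?_ hr2
  · exact (hr2.trans_lt (ENNReal.div_lt_top (by simp) (by simp))).ne
  · rw [mul_comm]
    exact (ENNReal.lt_div_iff_mul_lt (Or.inl hC0) (Or.inl hC)).1 hfh'
end

section
/- (Generalized Kolmogorov–Riesz theorem) Let X be a doubling metric measure space (closed balls of positive radius having positive finite measure) such that μ(B(x,r) △ B(y,r)) → 0 as y → x for all x ∈ X, r > 0, and let 1 ≤ p < ∞. A bounded set F ⊆ L^p(X) is relatively compact if and only if: (1) for every ε > 0 there is δ > 0 such that ‖A_r f − f‖_p < ε for all f ∈ F and r ∈ (0,δ); and (2) for every ε > 0 there is a bounded set E ⊆ X with ‖f·χ_{X∖E}‖_p < ε for all f ∈ F. -/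
open MeasureTheory Metric Filter
open scoped ENNReal

section KR
set_option linter.unusedSectionVars false
variable {X : Type*} [MetricSpace X] [MeasurableSpace X] [BorelSpace X] {μ : Measure X}

lemma kr_sigmaFinite
    (hball : ∀ (x : X) (r : ℝ), 0 < r → μ (closedBall x r) ≠ 0 ∧ μ (closedBall x r) ≠ ⊤)
    (x0 : X) : SigmaFinite μ := by
  refine ⟨⟨⟨fun n : ℕ => closedBall x0 (n + 1), fun n => trivial, fun n => ?_, ?_⟩⟩⟩
  · exact lt_top_iff_ne_top.2 (hball x0 _ (by positivity)).2
  · refine Set.eq_univ_of_forall fun x => ?_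
    obtain ⟨n, hn⟩ := exists_nat_ge (dist x x0)
    exact Set.mem_iUnion.2 ⟨n, by rw [mem_closedBall]; linarith⟩

lemma kr_locFinite
    (hball : ∀ (x : X) (r : ℝ), 0 < r → μ (closedBall x r) ≠ 0 ∧ μ (closedBall x r) ≠ ⊤) :
    IsLocallyFiniteMeasure μ :=
  ⟨fun x => ⟨closedBall x 1, closedBall_mem_nhds x one_pos,
    lt_top_iff_ne_top.2 (hball x _ one_pos).2⟩⟩

lemma kr_secondCountable [SigmaFinite μ]
    (hball : ∀ (x : X) (r : ℝ), 0 < r → μ (closedBall x r) ≠ 0 ∧ μ (closedBall x r) ≠ ⊤) :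
    SecondCountableTopology X := by
  refine Metric.secondCountable_of_almost_dense_set fun ε hε => ?_
  obtain ⟨u, -, hd, hu⟩ := Vitali.exists_disjoint_subfamily_covering_enlargement_closedBall
    (Set.univ : Set X) (fun x => x) (fun _ => ε / 5) (ε / 5) (fun _ _ => le_rfl) 5 (by norm_num)
  refine ⟨u, ?_, fun x => ?_⟩
  · have := Measure.countable_meas_pos_of_disjoint_iUnion (μ := μ)
      (As := fun i : u => closedBall (i : X) (ε / 5)) (fun i => measurableSet_closedBall)
      (fun i j hij => hd i.2 j.2 (fun h => hij (Subtype.ext h)))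
    have h2 : {i : u | 0 < μ (closedBall (i : X) (ε / 5))} = Set.univ :=
      Set.eq_univ_of_forall fun i => pos_iff_ne_zero.2 (hball _ _ (by positivity)).1
    rw [h2, Set.countable_univ_iff] at this
    exact Set.countable_coe_iff.1 this
  · obtain ⟨b, hb, h⟩ := hu x trivial
    refine ⟨b, hb, ?_⟩
    have := h (mem_closedBall_self (by positivity))
    rw [mem_closedBall] at this
    linarith

lemma kr_avg_congr {f g : X → ℝ} (h : f =ᵐ[μ] g) (r : ℝ) : avg μ r f = avg μ r g := by
  funext x
  unfold avg
  rw [integral_congr_ae (ae_restrict_of_ae h)]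

variable {p : ℝ≥0∞} [hp1 : Fact (1 ≤ p)]

lemma kr_intOn
    (hball : ∀ (x : X) (r : ℝ), 0 < r → μ (closedBall x r) ≠ 0 ∧ μ (closedBall x r) ≠ ⊤)
    {f : X → ℝ} (hf : MemLp f p μ) (x : X) {r : ℝ} (hr : 0 < r) :
    IntegrableOn f (closedBall x r) μ := by
  have : IsFiniteMeasure (μ.restrict (closedBall x r)) :=
    ⟨by simpa using lt_top_iff_ne_top.2 (hball x r hr).2⟩
  exact (hf.restrict _).integrable hp1.out

lemma kr_avg_sub
    (hball : ∀ (x : X) (r : ℝ), 0 < r → μ (closedBall x r) ≠ 0 ∧ μ (closedBall x r) ≠ ⊤)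
    {f g : X → ℝ} (hf : MemLp f p μ) (hg : MemLp g p μ) {r : ℝ} (hr : 0 < r) :
    avg μ r (f - g) = avg μ r f - avg μ r g := by
  funext x
  simp only [avg, Pi.sub_apply]
  rw [integral_sub (kr_intOn hball hf x hr) (kr_intOn hball hg x hr)]
  ring

/-- Jensen -/
lemma kr_jensen (hp' : p ≠ ⊤)
    (hball : ∀ (x : X) (r : ℝ), 0 < r → μ (closedBall x r) ≠ 0 ∧ μ (closedBall x r) ≠ ⊤)
    {f : X → ℝ} (hf : MemLp f p μ) (x : X) {r : ℝ} (hr : 0 < r) :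
    ‖avg μ r f x‖ₑ ≤
      (μ (closedBall x r))⁻¹ ^ (1 / p.toReal) * eLpNorm f p (μ.restrict (closedBall x r)) := by
  obtain ⟨h0, ht⟩ := hball x r hr
  have h1 := eLpNorm_le_eLpNorm_mul_rpow_measure_univ (μ := μ.restrict (closedBall x r))
    hp1.out (hf.1.restrict)
  have h2 : ‖∫ y in closedBall x r, f y ∂μ‖ₑ ≤ eLpNorm f 1 (μ.restrict (closedBall x r)) := by
    rw [eLpNorm_one_eq_lintegral_enorm]
    exact enorm_integral_le_lintegral_enorm _
  have h3 : ‖(μ (closedBall x r)).toReal⁻¹‖ₑ = (μ (closedBall x r))⁻¹ := by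
    rw [← ENNReal.toReal_inv, Real.enorm_of_nonneg ENNReal.toReal_nonneg, ENNReal.ofReal_toReal]
    simpa using h0
  unfold avg
  rw [enorm_mul, h3]
  refine (mul_le_mul_right (h2.trans h1) _).trans (le_of_eq ?_)
  rw [Measure.restrict_apply_univ, ENNReal.inv_rpow, ← ENNReal.rpow_neg,
    ← ENNReal.rpow_neg_one (μ (closedBall x r)), mul_comm (eLpNorm _ _ _), ← mul_assoc,
    ← ENNReal.rpow_add _ _ h0 ht]
  congr 2
  simp only [ENNReal.toReal_one]
  ring

lemma kr_measSet [SecondCountableTopology X] (r : ℝ) :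
    MeasurableSet {z : X × X | dist z.2 z.1 ≤ r} :=
  measurableSet_le (measurable_snd.dist measurable_fst) measurable_const

lemma kr_meas_ball [SecondCountableTopology X] [SigmaFinite μ] (r : ℝ) :
    Measurable fun x => μ (closedBall x r) :=
  measurable_measure_prodMk_left (kr_measSet (X := X) r)

lemma kr_meas_avg [SecondCountableTopology X] [SigmaFinite μ] {f : X → ℝ}
    (hf : AEStronglyMeasurable f μ) (r : ℝ) : Measurable (avg μ r f) := by
  rw [kr_avg_congr hf.ae_eq_mk]
  have hm := hf.stronglyMeasurable_mk
  set g := hf.mk f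
  refine (kr_meas_ball r).ennreal_toReal.inv.mul ?_
  have : StronglyMeasurable fun x => ∫ y, (closedBall x r).indicator g y ∂μ := by
    apply StronglyMeasurable.integral_prod_right
    have := (hm.comp_measurable measurable_snd).indicator (kr_measSet (X := X) r)
    exact this
  simp_rw [integral_indicator measurableSet_closedBall] at this
  exact this.measurable

/-- boundedness on Lp -/
lemma kr_bdd [SecondCountableTopology X] [SigmaFinite μ] (hp' : p ≠ ⊤)
    (hball : ∀ (x : X) (r : ℝ), 0 < r → μ (closedBall x r) ≠ 0 ∧ μ (closedBall x r) ≠ ⊤)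
    {γ : ℝ} (hdbl : ∀ (x : X) (r : ℝ), 0 < r →
      μ (closedBall x (2 * r)) ≤ ENNReal.ofReal γ * μ (closedBall x r))
    {f : X → ℝ} (hf : MemLp f p μ) {r : ℝ} (hr : 0 < r) :
    eLpNorm (avg μ r f) p μ ≤ ENNReal.ofReal γ ^ (1 / p.toReal) * eLpNorm f p μ := by
  have hp0 : p ≠ 0 := (zero_lt_one.trans_le hp1.out).ne'
  have hq : 0 < p.toReal := ENNReal.toReal_pos hp0 hp'
  rw [eLpNorm_eq_lintegral_rpow_enorm_toReal hp0 hp', eLpNorm_eq_lintegral_rpow_enorm_toReal hp0 hp',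
    ← ENNReal.mul_rpow_of_nonneg _ _ (by positivity)]
  refine ENNReal.rpow_le_rpow ?_ (by positivity)
  have hfm : AEMeasurable (fun y => ‖f y‖ₑ ^ p.toReal) μ := hf.1.enorm.pow_const _
  calc ∫⁻ x, ‖avg μ r f x‖ₑ ^ p.toReal ∂μ
      ≤ ∫⁻ x, (μ (closedBall x r))⁻¹ * ∫⁻ y in closedBall x r, ‖f y‖ₑ ^ p.toReal ∂μ ∂μ := by
        refine lintegral_mono fun x => ?_
        refine (ENNReal.rpow_le_rpow (kr_jensen hp' hball hf x hr) hq.le).trans (le_of_eq ?_)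
        rw [eLpNorm_eq_lintegral_rpow_enorm_toReal hp0 hp', ENNReal.mul_rpow_of_nonneg _ _ hq.le,
          ← ENNReal.rpow_mul, ← ENNReal.rpow_mul, one_div_mul_cancel hq.ne', ENNReal.rpow_one,
          ENNReal.rpow_one]
    _ = ∫⁻ x, ∫⁻ y, {z : X × X | dist z.2 z.1 ≤ r}.indicator
          (fun z => (μ (closedBall z.1 r))⁻¹ * ‖f z.2‖ₑ ^ p.toReal) (x, y) ∂μ ∂μ := by
        refine lintegral_congr fun x => ?_
        rw [← lintegral_const_mul'' _ hfm.restrict, ← lintegral_indicator measurableSet_closedBall]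
        rfl
    _ = ∫⁻ y, ∫⁻ x, {z : X × X | dist z.2 z.1 ≤ r}.indicator
          (fun z => (μ (closedBall z.1 r))⁻¹ * ‖f z.2‖ₑ ^ p.toReal) (x, y) ∂μ ∂μ := by
        refine lintegral_lintegral_swap ?_
        refine AEMeasurable.indicator ?_ (kr_measSet r)
        refine AEMeasurable.mul ?_ ?_
        · exact ((kr_meas_ball r).inv.comp measurable_fst).aemeasurable
        · exact hfm.comp_quasiMeasurePreserving Measure.quasiMeasurePreserving_snd
    _ ≤ ∫⁻ y, ENNReal.ofReal γ * ‖f y‖ₑ ^ p.toReal ∂μ := by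
        refine lintegral_mono fun y => ?_
        have hb : ∀ x, {z : X × X | dist z.2 z.1 ≤ r}.indicator
          (fun z => (μ (closedBall z.1 r))⁻¹ * ‖f z.2‖ₑ ^ p.toReal) (x, y) ≤
            (closedBall y r).indicator (fun _ => ENNReal.ofReal γ * (μ (closedBall y r))⁻¹ *
              ‖f y‖ₑ ^ p.toReal) x := by
          intro x
          by_cases hxy : dist y x ≤ r
          · rw [Set.indicator_of_mem (by exact hxy),
              Set.indicator_of_mem (by rw [mem_closedBall, dist_comm]; exact hxy)]
            refine mul_le_mul_left ?_ _
            have h1 : μ (closedBall y r) ≤ ENNReal.ofReal γ * μ (closedBall x r) :=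
              (measure_mono (closedBall_subset_closedBall' (by linarith))).trans (hdbl x r hr)
            obtain ⟨a0, at'⟩ := hball x r hr
            obtain ⟨b0, bt⟩ := hball y r hr
            rw [← div_eq_mul_inv, ENNReal.le_div_iff_mul_le (Or.inl b0) (Or.inl bt), mul_comm,
              ← div_eq_mul_inv, ENNReal.div_le_iff a0 at']
            exact h1
          · rw [Set.indicator_of_notMem (by exact hxy)]
            exact zero_le
        refine (lintegral_mono hb).trans (le_of_eq ?_)
        rw [lintegral_indicator_const measurableSet_closedBall]
        obtain ⟨b0, bt⟩ := hball y r hr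
        rw [mul_right_comm, mul_assoc (ENNReal.ofReal γ), ENNReal.inv_mul_cancel b0 bt, mul_one]
    _ = _ := lintegral_const_mul'' _ hfm

lemma kr_memLp [SecondCountableTopology X] [SigmaFinite μ] (hp' : p ≠ ⊤)
    (hball : ∀ (x : X) (r : ℝ), 0 < r → μ (closedBall x r) ≠ 0 ∧ μ (closedBall x r) ≠ ⊤)
    {γ : ℝ} (hdbl : ∀ (x : X) (r : ℝ), 0 < r →
      μ (closedBall x (2 * r)) ≤ ENNReal.ofReal γ * μ (closedBall x r))
    {f : X → ℝ} (hf : MemLp f p μ) {r : ℝ} (hr : 0 < r) : MemLp (avg μ r f) p μ :=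
  ⟨(kr_meas_avg hf.1 r).aestronglyMeasurable, (kr_bdd hp' hball hdbl hf hr).trans_lt
    (ENNReal.mul_lt_top (ENNReal.rpow_lt_top_of_nonneg (by positivity) ENNReal.ofReal_ne_top) hf.2)⟩

/-- local sup bound -/
lemma kr_sup (hp' : p ≠ ⊤)
    (hball : ∀ (x : X) (r : ℝ), 0 < r → μ (closedBall x r) ≠ 0 ∧ μ (closedBall x r) ≠ ⊤)
    {γ : ℝ} (hdbl : ∀ (x : X) (r : ℝ), 0 < r →
      μ (closedBall x (2 * r)) ≤ ENNReal.ofReal γ * μ (closedBall x r))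
    (x0 : X) {R r : ℝ} (hr : 0 < r) (hR : 0 < R) (N : ℝ≥0∞) (hN : N ≠ ⊤) :
    ∃ M : ℝ, 0 ≤ M ∧ ∀ f : X → ℝ, MemLp f p μ → eLpNorm f p μ ≤ N →
      ∀ x ∈ closedBall x0 R, |avg μ r f x| ≤ M := by
  have hk : ∀ (k : ℕ) (x : X),
      μ (closedBall x (2 ^ k * r)) ≤ ENNReal.ofReal γ ^ k * μ (closedBall x r) := by
    intro k x
    induction k with
    | zero => simp
    | succ k ih =>
      rw [pow_succ', mul_assoc, pow_succ', mul_assoc]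
      exact (hdbl x _ (by positivity)).trans (mul_le_mul_right ih _)
  obtain ⟨k, hkR⟩ := pow_unbounded_of_one_lt (2 * R / r) (one_lt_two)
  rw [div_lt_iff₀ hr] at hkR
  set c : ℝ≥0∞ := ENNReal.ofReal γ ^ k * (μ (closedBall x0 R))⁻¹ with hc
  obtain ⟨b0, bt⟩ := hball x0 R hR
  have hct : c ≠ ⊤ := ENNReal.mul_ne_top (ENNReal.pow_ne_top ENNReal.ofReal_ne_top)
    (ENNReal.inv_ne_top.2 b0)
  have hcx : ∀ x ∈ closedBall x0 R, (μ (closedBall x r))⁻¹ ≤ c := by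
    intro x hx
    obtain ⟨a0, at'⟩ := hball x r hr
    have h1 : μ (closedBall x0 R) ≤ ENNReal.ofReal γ ^ k * μ (closedBall x r) := by
      refine (measure_mono (closedBall_subset_closedBall' ?_)).trans (hk k x)
      rw [mem_closedBall, dist_comm] at hx
      linarith
    rw [hc, ← div_eq_mul_inv, ENNReal.le_div_iff_mul_le (Or.inl b0) (Or.inl bt), mul_comm,
              ← div_eq_mul_inv, ENNReal.div_le_iff a0 at']
    exact h1
  have hD : c ^ (1 / p.toReal) * N ≠ ⊤ :=
    ENNReal.mul_ne_top (ENNReal.rpow_ne_top_of_nonneg (by positivity) hct) hN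
  refine ⟨(c ^ (1 / p.toReal) * N).toReal, ENNReal.toReal_nonneg, fun f hf hfN x hx => ?_⟩
  have h := (kr_jensen hp' hball hf x hr).trans (mul_le_mul' (ENNReal.rpow_le_rpow (hcx x hx)
    (by positivity)) ((eLpNorm_mono_measure f Measure.restrict_le_self).trans hfN))
  rw [Real.enorm_eq_ofReal_abs, ENNReal.ofReal_le_iff_le_toReal hD] at h
  exact h

lemma kr_avg_sub_const
    (hball : ∀ (x : X) (r : ℝ), 0 < r → μ (closedBall x r) ≠ 0 ∧ μ (closedBall x r) ≠ ⊤)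
    {f : X → ℝ} {x : X} {r : ℝ} (hr : 0 < r) (hf : IntegrableOn f (closedBall x r) μ)
    {c η : ℝ} (h : ∀ y ∈ closedBall x r, |f y - c| ≤ η) : |avg μ r f x - c| ≤ η := by
  obtain ⟨h0, ht⟩ := hball x r hr
  have hm : 0 < μ.real (closedBall x r) := ENNReal.toReal_pos h0 ht
  have h1 := norm_setIntegral_le_of_norm_le_const (μ := μ) (f := fun y => f y - c)
    (lt_top_iff_ne_top.2 ht) h
  rw [integral_sub hf (integrableOn_const ht), setIntegral_const, smul_eq_mul,
    Real.norm_eq_abs] at h1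
  have h2 : avg μ r f x - c = (μ.real (closedBall x r))⁻¹ *
      (∫ y in closedBall x r, f y ∂μ - μ.real (closedBall x r) * c) := by
    unfold avg
    rw [mul_sub, ← mul_assoc, inv_mul_cancel₀ hm.ne', one_mul]
    rfl
  rw [h2, abs_mul, abs_of_pos (inv_pos.2 hm), inv_mul_le_iff₀ hm]
  linarith

lemma kr_conv_cont [SecondCountableTopology X] [SigmaFinite μ] (hp' : p ≠ ⊤)
    (hball : ∀ (x : X) (r : ℝ), 0 < r → μ (closedBall x r) ≠ 0 ∧ μ (closedBall x r) ≠ ⊤)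
    {g : X → ℝ} (hg : Continuous g) (hgp : MemLp g p μ) {M : ℝ} (hM : ∀ x, |g x| ≤ M)
    {x0 : X} {R : ℝ} (hR : 0 < R) (hg0 : ∀ x ∉ closedBall x0 R, g x = 0) :
    Tendsto (fun r => eLpNorm (fun x => avg μ r g x - g x) p μ) (nhdsWithin 0 (Set.Ioi 0))
      (nhds 0) := by
  have hp0 : p ≠ 0 := (zero_lt_one.trans_le hp1.out).ne'
  have hq : 0 < p.toReal := ENNReal.toReal_pos hp0 hp'
  simp_rw [eLpNorm_eq_lintegral_rpow_enorm_toReal hp0 hp']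
  have key : Tendsto (fun r => ∫⁻ x, ‖avg μ r g x - g x‖ₑ ^ p.toReal ∂μ)
      (nhdsWithin 0 (Set.Ioi 0)) (nhds (∫⁻ x : X, 0 ∂μ)) := by
    refine tendsto_lintegral_filter_of_dominated_convergence
      ((closedBall x0 (R + 1)).indicator fun _ => ENNReal.ofReal (2 * M) ^ p.toReal) ?_ ?_ ?_ ?_
    · refine Eventually.of_forall fun r => ?_
      exact ((kr_meas_avg hg.aestronglyMeasurable r).sub hg.measurable).enorm.pow_const _
    · filter_upwards [Ioo_mem_nhdsGT (one_pos : (0:ℝ) < 1)] with r hr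
      refine Eventually.of_forall fun x => ?_
      by_cases hx : x ∈ closedBall x0 (R + 1)
      · rw [Set.indicator_of_mem hx]
        refine ENNReal.rpow_le_rpow ?_ hq.le
        rw [Real.enorm_eq_ofReal_abs]
        refine ENNReal.ofReal_le_ofReal ?_
        have h1 := kr_avg_sub_const hball hr.1 (kr_intOn hball hgp x hr.1) (c := 0) (η := M)
          (fun y _ => by simpa using hM y)
        rw [sub_zero] at h1
        refine (abs_sub _ _).trans ?_
        linarith [hM x]
      · rw [Set.indicator_of_notMem hx]
        rw [mem_closedBall, not_le] at hx
        have h1 := kr_avg_sub_const hball hr.1 (kr_intOn hball hgp x hr.1) (c := 0) (η := 0)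
          (fun y hy => by
            rw [hg0 y]
            · simp
            · rw [mem_closedBall, not_le]
              rw [mem_closedBall, dist_comm] at hy
              linarith [dist_triangle x y x0, hr.2])
        have h2 : g x = 0 := hg0 x (by rw [mem_closedBall, not_le]; linarith)
        rw [sub_zero, abs_nonpos_iff] at h1
        rw [h1, h2]
        simp [hq]
    · rw [lintegral_indicator_const measurableSet_closedBall]
      exact ENNReal.mul_ne_top (ENNReal.rpow_ne_top_of_nonneg hq.le ENNReal.ofReal_ne_top)
        (hball _ _ (by linarith)).2
    · refine Eventually.of_forall fun x => ?_
      have h1 : Tendsto (fun r => avg μ r g x - g x) (nhdsWithin 0 (Set.Ioi 0)) (nhds 0) := by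
        rw [Metric.tendsto_nhds]
        intro η hη
        obtain ⟨δ, hδ, h⟩ := Metric.continuous_iff.1 hg x (η / 2) (by positivity)
        filter_upwards [Ioo_mem_nhdsGT hδ] with r hr
        have := kr_avg_sub_const hball hr.1 (kr_intOn hball hgp x hr.1) (c := g x) (η := η / 2)
          (fun y hy => (h y ((mem_closedBall.1 hy).trans_lt hr.2)).le)
        rw [Real.dist_eq, sub_zero]
        linarith
      have h2 := (h1.enorm).ennrpow_const p.toReal
      simpa [hq] using h2
  rw [lintegral_zero] at key
  have := key.ennrpow_const (1 / p.toReal)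
  rwa [ENNReal.zero_rpow_of_pos (by positivity)] at this

lemma kr_triple [SecondCountableTopology X] [SigmaFinite μ] (hp' : p ≠ ⊤)
    (hball : ∀ (x : X) (r : ℝ), 0 < r → μ (closedBall x r) ≠ 0 ∧ μ (closedBall x r) ≠ ⊤)
    {γ : ℝ} (hdbl : ∀ (x : X) (r : ℝ), 0 < r →
      μ (closedBall x (2 * r)) ≤ ENNReal.ofReal γ * μ (closedBall x r))
    {f g : X → ℝ} (hf : MemLp f p μ) (hg : MemLp g p μ) {r : ℝ} (hr : 0 < r) :
    eLpNorm (fun x => avg μ r f x - f x) p μ ≤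
      (ENNReal.ofReal γ ^ (1 / p.toReal) + 1) * eLpNorm (f - g) p μ +
        eLpNorm (fun x => avg μ r g x - g x) p μ := by
  have h1 := kr_bdd hp' hball hdbl (hf.sub hg) hr
  have e : (fun x => avg μ r f x - f x) =
      (avg μ r (f - g) + (g - f)) + (fun x => avg μ r g x - g x) := by
    rw [kr_avg_sub hball hf hg hr]
    funext x
    simp only [Pi.add_apply, Pi.sub_apply]
    ring
  have m1 := (kr_memLp hp' hball hdbl (hf.sub hg) hr).1
  have m2 := ((kr_memLp hp' hball hdbl hg hr).sub hg).1
  rw [e]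
  refine (eLpNorm_add_le (m1.add (hg.sub hf).1) m2 hp1.out).trans ?_
  refine add_le_add ?_ le_rfl
  refine (eLpNorm_add_le m1 (hg.sub hf).1 hp1.out).trans ?_
  rw [add_mul, one_mul, eLpNorm_sub_comm g f]
  exact add_le_add h1 le_rfl

lemma kr_tail (hp' : p ≠ ⊤) {f : X → ℝ} (hf : MemLp f p μ) (x0 : X) {e : ℝ≥0∞} (he : 0 < e) :
    ∃ n : ℕ, eLpNorm ((closedBall x0 n)ᶜ.indicator f) p μ < e := by
  have hp0 : p ≠ 0 := (zero_lt_one.trans_le hp1.out).ne'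
  have hq : 0 < p.toReal := ENNReal.toReal_pos hp0 hp'
  have key : Tendsto (fun n : ℕ => ∫⁻ x, ‖(closedBall x0 n)ᶜ.indicator f x‖ₑ ^ p.toReal ∂μ)
      atTop (nhds (∫⁻ x : X, 0 ∂μ)) := by
    refine tendsto_lintegral_filter_of_dominated_convergence' (fun x => ‖f x‖ₑ ^ p.toReal)
      ?_ ?_ ?_ ?_
    · exact Eventually.of_forall fun n =>
        (hf.1.indicator measurableSet_closedBall.compl).enorm.pow_const _
    · exact Eventually.of_forall fun n => Eventually.of_forall fun x =>
        ENNReal.rpow_le_rpow (enorm_indicator_le_enorm_self _ _) hq.le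
    · exact (lintegral_rpow_enorm_lt_top_of_eLpNorm_lt_top hp0 hp' hf.2).ne
    · refine Eventually.of_forall fun x => ?_
      refine tendsto_const_nhds.congr' ?_
      obtain ⟨N, hN⟩ := exists_nat_ge (dist x x0)
      filter_upwards [eventually_ge_atTop N] with n hn
      have : x ∈ closedBall x0 (n : ℝ) := by
        rw [mem_closedBall]; exact hN.trans (by exact_mod_cast hn)
      rw [Set.indicator_of_notMem (by simpa using this)]
      simp [hq]
  rw [lintegral_zero] at key
  have := key.ennrpow_const (1 / p.toReal)
  rw [ENNReal.zero_rpow_of_pos (by positivity)] at this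
  simp_rw [eLpNorm_eq_lintegral_rpow_enorm_toReal hp0 hp']
  exact (this.eventually_lt_const he).exists

lemma kr_dense [SecondCountableTopology X] [IsLocallyFiniteMeasure μ] (hp' : p ≠ ⊤)
    {f : X → ℝ} (hf : MemLp f p μ) (x0 : X) {e : ℝ≥0∞} (he : 0 < e) :
    ∃ (g : X → ℝ) (M R : ℝ), Continuous g ∧ MemLp g p μ ∧ (∀ x, |g x| ≤ M) ∧ 0 < R ∧
      (∀ x ∉ closedBall x0 R, g x = 0) ∧ eLpNorm (f - g) p μ ≤ e := by
  have he2 : 0 < e / 2 := ENNReal.half_pos he.ne'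
  obtain ⟨n, hn⟩ := kr_tail hp' hf x0 he2
  obtain ⟨h, hh, hhp⟩ := hf.exists_boundedContinuous_eLpNorm_sub_le hp' he2.ne'
  set φ : X → ℝ := fun x => max 0 (min 1 (n + 1 - dist x x0)) with hφ
  have hφc : Continuous φ := by fun_prop
  have hφ0 : ∀ x, 0 ≤ φ x := fun x => le_max_left _ _
  have hφ1 : ∀ x, φ x ≤ 1 := fun x => max_le zero_le_one (min_le_left _ _)
  have hle : ∀ x, |h x * φ x| ≤ |h x| := fun x => by
    rw [abs_mul, abs_of_nonneg (hφ0 x)]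
    exact mul_le_of_le_one_right (abs_nonneg _) (hφ1 x)
  have hc : Continuous fun x => h x * φ x := h.continuous.mul hφc
  refine ⟨fun x => h x * φ x, ‖h‖, n + 1, hc, ?_, ?_, by positivity, ?_, ?_⟩
  · exact hhp.mono hc.aestronglyMeasurable (Eventually.of_forall hle)
  · exact fun x => (hle x).trans (h.norm_coe_le_norm x)
  · intro x hx
    rw [mem_closedBall, not_le] at hx
    have : φ x = 0 := max_eq_left ((min_le_right _ _).trans (by linarith))
    simp only [this, mul_zero]
  · have hb : ∀ x, ‖(f - fun x => h x * φ x) x‖ ≤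
        ‖f x - h x‖ + ‖(closedBall x0 n)ᶜ.indicator f x‖ := by
      intro x
      simp only [Pi.sub_apply]
      by_cases hx : x ∈ closedBall x0 (n : ℝ)
      · have h1 : φ x = 1 := by
          rw [mem_closedBall] at hx
          rw [hφ]
          simp only
          rw [min_eq_left (by linarith)]
          simp
        rw [h1, mul_one]
        exact le_add_of_nonneg_right (norm_nonneg _)
      · rw [Set.indicator_of_mem (by exact hx)]
        have : f x - h x * φ x = (f x - h x) * φ x + f x * (1 - φ x) := by ring
        rw [this]
        refine (norm_add_le _ _).trans (add_le_add ?_ ?_)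
        · rw [norm_mul]
          exact mul_le_of_le_one_right (norm_nonneg _)
            (by rw [Real.norm_of_nonneg (hφ0 x)]; exact hφ1 x)
        · rw [norm_mul]
          exact mul_le_of_le_one_right (norm_nonneg _)
            (by rw [Real.norm_of_nonneg (by linarith [hφ1 x])]; linarith [hφ0 x])
    refine (eLpNorm_mono_real hb).trans ?_
    refine (eLpNorm_add_le (hf.sub hhp).1.norm
      (hf.1.indicator measurableSet_closedBall.compl).norm hp1.out).trans ?_
    rw [eLpNorm_norm, eLpNorm_norm, ← ENNReal.add_halves e]
    exact add_le_add hh hn.le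

lemma kr_conv [SecondCountableTopology X] [SigmaFinite μ] [IsLocallyFiniteMeasure μ] (hp' : p ≠ ⊤)
    (hball : ∀ (x : X) (r : ℝ), 0 < r → μ (closedBall x r) ≠ 0 ∧ μ (closedBall x r) ≠ ⊤)
    {γ : ℝ} (hdbl : ∀ (x : X) (r : ℝ), 0 < r →
      μ (closedBall x (2 * r)) ≤ ENNReal.ofReal γ * μ (closedBall x r))
    {f : X → ℝ} (hf : MemLp f p μ) (x0 : X) :
    Tendsto (fun r => eLpNorm (fun x => avg μ r f x - f x) p μ) (nhdsWithin 0 (Set.Ioi 0))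
      (nhds 0) := by
  rw [ENNReal.tendsto_nhds_zero]
  intro e he
  set C := ENNReal.ofReal γ ^ (1 / p.toReal) + 1 with hC
  have hCt : C + 1 ≠ ⊤ := by
    simp [hC]
  have he' : 0 < e / (C + 1) := ENNReal.div_pos he.ne' hCt
  obtain ⟨g, M, R, hg, hgp, hM, hR, hg0, hfg⟩ := kr_dense hp' hf x0 he'
  have := kr_conv_cont hp' hball hg hgp hM hR hg0
  filter_upwards [this.eventually_lt_const he', self_mem_nhdsWithin] with r h1 hr
  refine (kr_triple hp' hball hdbl hf hgp hr).trans ?_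
  calc _ ≤ C * (e / (C + 1)) + e / (C + 1) := add_le_add (mul_le_mul_right hfg _) h1.le
    _ = (C + 1) * (e / (C + 1)) := by rw [add_mul C 1, one_mul]
    _ ≤ e := ENNReal.mul_div_le

lemma kr_symm_int {h : X → ℝ} {S T : Set X} (hS : MeasurableSet S) (hT : MeasurableSet T)
    (hSi : IntegrableOn h S μ) (hTi : IntegrableOn h T μ) {M : ℝ} (hM0 : 0 ≤ M)
    (hM : ∀ x ∈ S ∪ T, |h x| ≤ M) (hfin : μ (symmDiff S T) ≠ ⊤) :
    |∫ x in T, h x ∂μ - ∫ x in S, h x ∂μ| ≤ 2 * M * μ.real (symmDiff S T) := by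
  have h1 := integral_inter_add_sdiff hT hSi
  have h2 := integral_inter_add_sdiff hS hTi
  have hsub1 : S \ T ⊆ symmDiff S T := fun x hx => Or.inl hx
  have hsub2 : T \ S ⊆ symmDiff S T := fun x hx => Or.inr hx
  have b1 := norm_setIntegral_le_of_norm_le_const (μ := μ) (f := h) (s := S \ T) (C := M)
    ((measure_mono hsub1).trans_lt (lt_top_iff_ne_top.2 hfin)) (fun x hx => hM x (Or.inl hx.1))
  have b2 := norm_setIntegral_le_of_norm_le_const (μ := μ) (f := h) (s := T \ S) (C := M)
    ((measure_mono hsub2).trans_lt (lt_top_iff_ne_top.2 hfin)) (fun x hx => hM x (Or.inr hx.1))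
  have c1 : M * μ.real (S \ T) ≤ M * μ.real (symmDiff S T) :=
    mul_le_mul_of_nonneg_left (measureReal_mono hsub1 hfin) hM0
  have c2 : M * μ.real (T \ S) ≤ M * μ.real (symmDiff S T) :=
    mul_le_mul_of_nonneg_left (measureReal_mono hsub2 hfin) hM0
  rw [Set.inter_comm T S] at h2
  rw [← h1, ← h2]
  rw [Real.norm_eq_abs, abs_le] at b1 b2
  rw [abs_le]
  constructor <;> linarith [b1.1, b1.2, b2.1, b2.2]

lemma kr_equi [SecondCountableTopology X] [SigmaFinite μ] (hp' : p ≠ ⊤)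
    (hball : ∀ (x : X) (r : ℝ), 0 < r → μ (closedBall x r) ≠ 0 ∧ μ (closedBall x r) ≠ ⊤)
    {γ : ℝ} (hdbl : ∀ (x : X) (r : ℝ), 0 < r →
      μ (closedBall x (2 * r)) ≤ ENNReal.ofReal γ * μ (closedBall x r))
    (hsymm : ∀ (x : X) (r : ℝ), 0 < r →
      Tendsto (fun y => μ (symmDiff (closedBall x r) (closedBall y r))) (nhds x) (nhds 0))
    {r : ℝ} (hr : 0 < r) {N : ℝ≥0∞} (hN : N ≠ ⊤) (x : X) {η : ℝ} (hη : 0 < η) :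
    ∀ᶠ y in nhds x, ∀ f : X → ℝ, MemLp f p μ → eLpNorm f p μ ≤ N →
      |avg μ r (avg μ r f) y - avg μ r (avg μ r f) x| ≤ η := by
  obtain ⟨M, hM0, hM⟩ := kr_sup hp' hball hdbl x hr (by positivity : 0 < r + 1) N hN
  obtain ⟨h0, ht⟩ := hball x r hr
  set m := μ.real (closedBall x r) with hm
  have hmpos : 0 < m := ENNReal.toReal_pos h0 ht
  have hD0 : 0 < η * m / (4 * M + 1) := by positivity
  filter_upwards [(hsymm x r hr).eventually_lt_const (ENNReal.ofReal_pos.2 hD0),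
    closedBall_mem_nhds x one_pos] with y hy hy1 f hf hfN
  have hfin : μ (symmDiff (closedBall x r) (closedBall y r)) ≠ ⊤ := (hy.trans_le le_top).ne
  set D := μ.real (symmDiff (closedBall x r) (closedBall y r)) with hD
  have hDle : D ≤ η * m / (4 * M + 1) :=
    ENNReal.toReal_le_of_le_ofReal hD0.le hy.le
  obtain ⟨g0, gt⟩ := hball y r hr
  set m' := μ.real (closedBall y r) with hm'
  have hmpos' : 0 < m' := ENNReal.toReal_pos g0 gt
  set h := avg μ r f with hh
  have hhp : MemLp h p μ := kr_memLp hp' hball hdbl hf hr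
  have hMy : ∀ z ∈ closedBall y r, |h z| ≤ M := fun z hz => hM f hf hfN z (by
    rw [mem_closedBall] at *
    linarith [dist_triangle z y x])
  have hMx : ∀ z ∈ closedBall x r, |h z| ≤ M := fun z hz => hM f hf hfN z (by
    rw [mem_closedBall] at *
    linarith)
  have k1 := kr_symm_int (μ := μ) (h := h) (S := closedBall x r) (T := closedBall y r)
    measurableSet_closedBall measurableSet_closedBall (kr_intOn hball hhp x hr)
    (kr_intOn hball hhp y hr) hM0 (fun z hz => hz.elim (hMx z) (hMy z)) hfin
  have k2 := kr_symm_int (μ := μ) (h := fun _ => 1) (S := closedBall x r) (T := closedBall y r)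
    measurableSet_closedBall measurableSet_closedBall (integrableOn_const ht)
    (integrableOn_const gt) zero_le_one (fun z hz => by simp) hfin
  have k3 := norm_setIntegral_le_of_norm_le_const (μ := μ) (f := h) (s := closedBall y r) (C := M)
    (lt_top_iff_ne_top.2 gt) hMy
  simp only [setIntegral_const, smul_eq_mul, mul_one] at k2
  rw [Real.norm_eq_abs] at k3
  set Ix := ∫ z in closedBall x r, h z ∂μ
  set Iy := ∫ z in closedBall y r, h z ∂μ
  have e : avg μ r h y - avg μ r h x = m⁻¹ * ((Iy - Ix) - (m' - m) * (Iy / m')) := by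
    change m'⁻¹ * Iy - m⁻¹ * Ix = _
    field_simp
    ring
  have k4 : |Iy / m'| ≤ M := by
    rw [abs_div, abs_of_pos hmpos', div_le_iff₀ hmpos']
    exact k3
  have k5 : |(m' - m) * (Iy / m')| ≤ 2 * D * M := by
    rw [abs_mul]
    exact mul_le_mul k2 k4 (abs_nonneg _) (by positivity)
  rw [e, abs_mul, abs_of_pos (inv_pos.2 hmpos), inv_mul_le_iff₀ hmpos]
  refine (abs_sub _ _).trans ?_
  rw [le_div_iff₀ (by positivity)] at hDle
  have : 0 ≤ D := measureReal_nonneg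
  nlinarith

lemma kr_net [SecondCountableTopology X] [SigmaFinite μ] (hp' : p ≠ ⊤)
    (hball : ∀ (x : X) (r : ℝ), 0 < r → μ (closedBall x r) ≠ 0 ∧ μ (closedBall x r) ≠ ⊤)
    {γ : ℝ} (hdbl : ∀ (x : X) (r : ℝ), 0 < r →
      μ (closedBall x (2 * r)) ≤ ENNReal.ofReal γ * μ (closedBall x r))
    (hsymm : ∀ (x : X) (r : ℝ), 0 < r →
      Tendsto (fun y => μ (symmDiff (closedBall x r) (closedBall y r))) (nhds x) (nhds 0))
    {r : ℝ} (hr : 0 < r) {N : ℝ≥0∞} (hN : N ≠ ⊤) (x0 : X) {R : ℝ} (hR : 0 < R)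
    {e : ℝ} (he : 0 < e) :
    ∃ K : Set (Lp ℝ p μ), IsCompact K ∧ ∀ f : X → ℝ, MemLp f p μ → eLpNorm f p μ ≤ N →
      ∃ k ∈ K, eLpNorm ((closedBall x0 R).indicator (avg μ r (avg μ r f)) - ⇑k) p μ
        ≤ ENNReal.ofReal e := by
  have hp0 : p ≠ 0 := (zero_lt_one.trans_le hp1.out).ne'
  have hq : 0 < p.toReal := ENNReal.toReal_pos hp0 hp'
  set C := ENNReal.ofReal γ ^ (1 / p.toReal) with hC
  have hCN : C * N ≠ ⊤ := ENNReal.mul_ne_top (by simp [hC]) hN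
  have hsup : ∀ (x : X) {R : ℝ}, 0 < R → ∃ M : ℝ, 0 ≤ M ∧ ∀ f : X → ℝ, MemLp f p μ →
      eLpNorm f p μ ≤ N → ∀ y ∈ closedBall x R, |avg μ r (avg μ r f) y| ≤ M := by
    intro x R hR
    obtain ⟨M, h0, h⟩ := kr_sup hp' hball hdbl x hr hR (C * N) hCN
    exact ⟨M, h0, fun f hf hfN => h _ (kr_memLp hp' hball hdbl hf hr)
      ((kr_bdd hp' hball hdbl hf hr).trans (mul_le_mul_right hfN _))⟩
  obtain ⟨M, hM0, hM⟩ := hsup x0 hR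
  choose Mx hMx0 hMx using fun x => hsup x one_pos
  set E := closedBall x0 R with hE
  obtain ⟨E0, Et⟩ := hball x0 R hR
  have hEm : MeasurableSet E := measurableSet_closedBall
  set c := μ E ^ (1 / p.toReal) with hc
  have hct : c ≠ ⊤ := ENNReal.rpow_ne_top_of_nonneg (by positivity) Et
  set η := (e / 2) / (c.toReal + 1) with hη
  have hc0 : 0 ≤ c.toReal := ENNReal.toReal_nonneg
  have hηpos : 0 < η := by positivity
  have hηc : ENNReal.ofReal η * c ≤ ENNReal.ofReal (e / 2) := by
    rw [← ENNReal.ofReal_toReal hct, ← ENNReal.ofReal_mul hηpos.le]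
    refine ENNReal.ofReal_le_ofReal ?_
    rw [hη, div_mul_eq_mul_div, div_le_iff₀ (by positivity)]
    nlinarith
  have hnh := fun x => kr_equi hp' hball hdbl hsymm hr hN x hηpos
  choose U hU1 hU2 hU3 using fun x => _root_.eventually_nhds_iff.1 (hnh x)
  obtain ⟨s, hsc, hs⟩ := TopologicalSpace.countable_cover_nhds
    (fun x => (hU2 x).mem_nhds (hU3 x))
  have hsne : s.Nonempty := by
    by_contra hemp
    rw [Set.not_nonempty_iff_eq_empty] at hemp
    subst hemp
    have : x0 ∈ (Set.univ : Set X) := trivial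
    rw [← hs] at this
    simp at this
  obtain ⟨u, rfl⟩ := hsc.exists_eq_range hsne
  rw [Set.biUnion_range] at hs
  set W : ℕ → Set X := disjointed fun i => U (u i) with hW
  have hWm : ∀ i, MeasurableSet (W i) := MeasurableSet.disjointed fun i => (hU2 _).measurableSet
  have hWU : ∀ i, W i ⊆ U (u i) := fun i => disjointed_subset _ i
  have hWd : Pairwise (Function.onFun Disjoint W) := disjoint_disjointed _
  have hWc : ⋃ i, W i = Set.univ := by rw [hW, iUnion_disjointed, hs]
  have hVm : ∀ n, MeasurableSet (E \ ⋃ i ∈ Finset.range n, W i) := fun n =>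
    hEm.diff (Finset.measurableSet_biUnion _ fun i _ => hWm i)
  have htend : Tendsto (fun n => μ (E \ ⋃ i ∈ Finset.range n, W i)) atTop (nhds 0) := by
    have := tendsto_measure_iInter_atTop (μ := μ)
      (s := fun n => E \ ⋃ i ∈ Finset.range n, W i) (fun n => (hVm n).nullMeasurableSet)
      (fun a b hab => Set.sdiff_subset_sdiff_right (Set.biUnion_subset_biUnion_left
        (by exact_mod_cast Finset.range_mono hab)))
      ⟨0, ((measure_mono Set.sdiff_subset).trans_lt (lt_top_iff_ne_top.2 Et)).ne⟩
    have h0 : ⋂ n, E \ ⋃ i ∈ Finset.range n, W i = ∅ := by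
      refine Set.eq_empty_of_forall_notMem fun x hx => ?_
      have hxu : x ∈ ⋃ i, W i := by rw [hWc]; trivial
      obtain ⟨i, hi⟩ := Set.mem_iUnion.1 hxu
      refine (Set.mem_iInter.1 hx (i + 1)).2 ?_
      exact Set.mem_biUnion (by simp) hi
    rw [h0, measure_empty] at this
    exact this
  have htend2 : Tendsto (fun n => ENNReal.ofReal M *
      μ (E \ ⋃ i ∈ Finset.range n, W i) ^ (1 / p.toReal)) atTop (nhds 0) := by
    have := ENNReal.Tendsto.const_mul (a := ENNReal.ofReal M) (htend.ennrpow_const (1 / p.toReal))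
      (Or.inr ENNReal.ofReal_ne_top)
    rwa [ENNReal.zero_rpow_of_pos (by positivity), mul_zero] at this
  obtain ⟨n, hn⟩ := (htend2.eventually_lt_const
    (ENNReal.ofReal_pos.2 (half_pos he))).exists
  have hEWt : ∀ i, μ (E ∩ W i) ≠ ⊤ := fun i =>
    ((measure_mono Set.inter_subset_left).trans_lt (lt_top_iff_ne_top.2 Et)).ne
  set b : ℕ → Lp ℝ p μ := fun i => indicatorConstLp p (hEm.inter (hWm i)) (hEWt i) (1 : ℝ) with hb
  set Φ : (ℕ → ℝ) → Lp ℝ p μ := fun a => ∑ i ∈ Finset.range n, a i • b i with hΦ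
  have hΦc : Continuous Φ := by
    refine continuous_finsetSum _ fun i _ => ?_
    exact (continuous_apply i).smul continuous_const
  refine ⟨Φ '' (Set.univ.pi fun i => Set.Icc (-Mx (u i)) (Mx (u i))),
    (isCompact_univ_pi fun i => isCompact_Icc).image hΦc, fun f hf hfN => ?_⟩
  set T := avg μ r (avg μ r f) with hT
  refine ⟨_, ⟨fun i => T (u i), ?_, rfl⟩, ?_⟩
  · intro i _
    exact abs_le.1 (hMx (u i) f hf hfN (u i) (mem_closedBall_self zero_le_one))
  have hcoe : (Φ fun i => T (u i)) =ᵐ[μ] fun x => ∑ i ∈ Finset.range n,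
      T (u i) * (E ∩ W i).indicator (fun _ => (1 : ℝ)) x := by
    have h1 : ∀ᵐ x ∂μ, ∀ i : ℕ, (T (u i) • b i : Lp ℝ p μ) x =
        T (u i) * (E ∩ W i).indicator (fun _ => (1 : ℝ)) x := by
      rw [ae_all_iff]
      intro i
      filter_upwards [Lp.coeFn_smul (T (u i)) (b i),
        indicatorConstLp_coeFn (p := p) (hs := hEm.inter (hWm i)) (hμs := hEWt i) (c := (1:ℝ))]
        with x hx1 hx2
      rw [hx1, Pi.smul_apply, smul_eq_mul, hb]
      simp only
      rw [hx2]
    filter_upwards [h1, Lp.coeFn_finsetSum (Finset.range n) (fun i => T (u i) • b i)] with x hx hx2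
    rw [hΦ]
    simp only
    rw [hx2, Finset.sum_apply]
    exact Finset.sum_congr rfl fun i _ => hx i
  have hbound : ∀ᵐ x ∂μ, ‖(E.indicator T - ⇑(Φ fun i => T (u i))) x‖ ≤
      E.indicator (fun _ => η) x +
        (E \ ⋃ i ∈ Finset.range n, W i).indicator (fun _ => M) x := by
    filter_upwards [hcoe] with x hx
    rw [Pi.sub_apply, hx]
    by_cases hxE : x ∈ E
    · by_cases hxW : x ∈ ⋃ i ∈ Finset.range n, W i
      · obtain ⟨j, hj, hxj⟩ := Set.mem_iUnion₂.1 hxW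
        rw [Finset.sum_eq_single j]
        · rw [Set.indicator_of_mem hxE, Set.indicator_of_mem (Set.mem_inter hxE hxj),
            Set.indicator_of_mem hxE, Set.indicator_of_notMem (fun h => h.2 hxW), mul_one, add_zero]
          exact hU1 (u j) x (hWU j hxj) f hf hfN
        · intro i _ hij
          rw [Set.indicator_of_notMem, mul_zero]
          exact fun h => Set.disjoint_left.1 (hWd hij) h.2 hxj
        · exact fun h => absurd hj h
      · rw [Finset.sum_eq_zero, Set.indicator_of_mem hxE, Set.indicator_of_mem hxE,
          Set.indicator_of_mem (Set.mem_sdiff_of_mem hxE hxW), sub_zero]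
        · have := hM f hf hfN x hxE
          rw [Real.norm_eq_abs]
          linarith
        · intro i hi
          rw [Set.indicator_of_notMem, mul_zero]
          exact fun h => hxW (Set.mem_biUnion hi h.2)
    · rw [Finset.sum_eq_zero, Set.indicator_of_notMem hxE, Set.indicator_of_notMem hxE,
        Set.indicator_of_notMem (fun h => hxE h.1)]
      · simp
      · intro i _
        rw [Set.indicator_of_notMem (fun h => hxE h.1), mul_zero]
  refine (eLpNorm_mono_ae_real hbound).trans ?_
  refine (eLpNorm_add_le (stronglyMeasurable_const.indicator hEm).aestronglyMeasurable
    (stronglyMeasurable_const.indicator (hVm n)).aestronglyMeasurable hp1.out).trans ?_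
  rw [eLpNorm_indicator_const hEm hp0 hp', eLpNorm_indicator_const (hVm n) hp0 hp',
    Real.enorm_of_nonneg hηpos.le, Real.enorm_of_nonneg hM0, ← add_halves e,
    ENNReal.ofReal_add (by positivity) (by positivity)]
  refine add_le_add ?_ hn.le
  exact hηc

end KR

/-- Generalized Kolmogorov–Riesz compactness criterion in `L^p` of a doubling
metric measure space. -/
theorem kolmogorov_riesz {X : Type*} [MetricSpace X] [MeasurableSpace X] [BorelSpace X]
    (μ : Measure X)
    (hball : ∀ (x : X) (r : ℝ), 0 < r → μ (closedBall x r) ≠ 0 ∧ μ (closedBall x r) ≠ ⊤)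
    (γ : ℝ) (hγ : 1 ≤ γ)
    (hdbl : ∀ (x : X) (r : ℝ), 0 < r →
      μ (closedBall x (2 * r)) ≤ ENNReal.ofReal γ * μ (closedBall x r))
    (hsymm : ∀ (x : X) (r : ℝ), 0 < r →
      Tendsto (fun y => μ (symmDiff (closedBall x r) (closedBall y r))) (nhds x) (nhds 0))
    (p : ℝ≥0∞) [Fact (1 ≤ p)] (hp' : p ≠ ⊤)
    (F : Set (MeasureTheory.Lp ℝ p μ)) (hFbdd : Bornology.IsBounded F) :
    IsCompact (closure F) ↔
      ((∀ ε : ℝ, 0 < ε → ∃ δ : ℝ, 0 < δ ∧ ∀ f ∈ F, ∀ r : ℝ, 0 < r → r < δ →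
          eLpNorm (fun x => avg μ r f x - f x) p μ < ENNReal.ofReal ε) ∧
        (∀ ε : ℝ, 0 < ε → ∃ E : Set X, Bornology.IsBounded E ∧ ∀ f ∈ F,
          eLpNorm (Eᶜ.indicator f) p μ < ENNReal.ofReal ε)) := by
  have hp1 : 1 ≤ p := Fact.out
  rcases isEmpty_or_nonempty X with hX | ⟨⟨x0⟩⟩
  · have hμ : μ = 0 := Measure.eq_zero_of_isEmpty μ
    subst hμ
    refine iff_of_true ?_ ⟨fun ε hε => ⟨1, one_pos, fun f _ r _ _ => ?_⟩,
      fun ε hε => ⟨∅, Bornology.isBounded_empty, fun f _ => ?_⟩⟩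
    · have : Subsingleton (Lp ℝ p (0 : Measure X)) :=
        ⟨fun f g => Lp.ext (by simp [EventuallyEq])⟩
      exact (Set.toFinite _).isCompact
    · simpa using hε
    · simpa using hε
  have hsf : SigmaFinite μ := kr_sigmaFinite hball x0
  have hsc : SecondCountableTopology X := kr_secondCountable hball
  have hlf : IsLocallyFiniteMeasure μ := kr_locFinite hball
  have hCt : ENNReal.ofReal γ ^ (1 / p.toReal) + 1 ≠ ⊤ := by simp
  set C := ENNReal.ofReal γ ^ (1 / p.toReal) + 1 with hC
  have hsmall : ∀ e : ℝ, 0 < e → ∃ e' : ℝ, 0 < e' ∧ e' ≤ e ∧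
      C * ENNReal.ofReal e' ≤ ENNReal.ofReal e := by
    intro e he
    have h0 : 0 ≤ C.toReal := ENNReal.toReal_nonneg
    refine ⟨e / (C.toReal + 1), by positivity, div_le_self he.le (by linarith), ?_⟩
    rw [← ENNReal.ofReal_toReal hCt, ← ENNReal.ofReal_mul h0, ENNReal.toReal_ofReal h0]
    refine ENNReal.ofReal_le_ofReal ?_
    rw [mul_div_assoc', div_le_iff₀ (by positivity)]
    nlinarith
  have hhalf : ∀ e : ℝ, 0 < e →
      ENNReal.ofReal e = ENNReal.ofReal (e / 2) + ENNReal.ofReal (e / 2) := by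
    intro e he
    rw [← ENNReal.ofReal_add (by positivity) (by positivity), add_halves]
  constructor
  · intro hK
    have htb : TotallyBounded F := hK.totallyBounded.subset subset_closure
    refine ⟨fun ε hε => ?_, fun ε hε => ?_⟩
    · obtain ⟨e, he, -, hCe⟩ := hsmall (ε / 2) (by positivity)
      obtain ⟨t, ht, hFt⟩ := EMetric.totallyBounded_iff.1 htb (ENNReal.ofReal e)
        (ENNReal.ofReal_pos.2 he)
      have hev : ∀ᶠ r in nhdsWithin (0 : ℝ) (Set.Ioi 0), ∀ g ∈ t,
          eLpNorm (fun x => avg μ r g x - g x) p μ < ENNReal.ofReal (ε / 2) := by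
        rw [eventually_all_finite ht]
        intro g _
        exact (kr_conv hp' hball hdbl (Lp.memLp g) x0).eventually_lt_const
          (ENNReal.ofReal_pos.2 (by positivity))
      obtain ⟨δ, hδ, h⟩ := mem_nhdsGT_iff_exists_Ioo_subset.1 hev
      refine ⟨δ, hδ, fun f hf r hr hrδ => ?_⟩
      obtain ⟨g, hg, hfg⟩ := Set.mem_iUnion₂.1 (hFt hf)
      rw [Metric.mem_eball, Lp.edist_def] at hfg
      refine (kr_triple hp' hball hdbl (Lp.memLp f) (Lp.memLp g) hr).trans_lt ?_
      rw [hhalf ε hε]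
      refine ENNReal.add_lt_add_of_le_of_lt ?_ ?_ (h ⟨hr, hrδ⟩ g hg)
      · exact ((mul_le_mul_right hfg.le _).trans_lt
          (ENNReal.mul_lt_top (lt_top_iff_ne_top.2 hCt) ENNReal.ofReal_lt_top)).ne
      · exact (mul_le_mul_right hfg.le _).trans hCe
    · obtain ⟨t, ht, hFt⟩ := EMetric.totallyBounded_iff.1 htb (ENNReal.ofReal (ε / 2))
        (ENNReal.ofReal_pos.2 (by positivity))
      choose n hn using fun g : Lp ℝ p μ => kr_tail hp' (Lp.memLp g) x0
        (ENNReal.ofReal_pos.2 (half_pos hε))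
      refine ⟨⋃ g ∈ t, closedBall x0 (n g),
        (Bornology.isBounded_biUnion ht).2 fun g _ => isBounded_closedBall, fun f hf => ?_⟩
      obtain ⟨g, hg, hfg⟩ := Set.mem_iUnion₂.1 (hFt hf)
      rw [Metric.mem_eball, Lp.edist_def] at hfg
      have hb : ∀ x, ‖(⋃ g ∈ t, closedBall x0 (n g : ℝ))ᶜ.indicator f x‖ ≤
          ‖(⇑f - ⇑g) x‖ + ‖(closedBall x0 (n g : ℝ))ᶜ.indicator g x‖ := by
        intro x
        by_cases hx : x ∈ ⋃ g ∈ t, closedBall x0 (n g : ℝ)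
        · rw [Set.indicator_of_notMem (by simpa using hx), norm_zero]
          positivity
        · have hx' : x ∉ closedBall x0 (n g : ℝ) := fun h => hx (Set.mem_biUnion hg h)
          rw [Set.indicator_of_mem (by exact hx), Set.indicator_of_mem (by exact hx')]
          calc ‖f x‖ = ‖(⇑f - ⇑g) x + g x‖ := by simp
            _ ≤ _ := norm_add_le _ _
      refine (eLpNorm_mono_real hb).trans_lt ?_
      refine (eLpNorm_add_le ((Lp.memLp f).sub (Lp.memLp g)).1.norm
        ((Lp.memLp g).1.indicator measurableSet_closedBall.compl).norm hp1).trans_lt ?_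
      rw [eLpNorm_norm, eLpNorm_norm, hhalf ε hε]
      exact ENNReal.add_lt_add hfg (hn g)
  · rintro ⟨h1, h2⟩
    suffices htb : TotallyBounded F from
      isCompact_iff_totallyBounded_isComplete.2 ⟨htb.closure, isClosed_closure.isComplete⟩
    obtain ⟨B, hB⟩ := hFbdd.exists_norm_le
    have hN : ∀ f ∈ F, eLpNorm f p μ ≤ ENNReal.ofReal B := by
      intro f hf
      rw [← Lp.enorm_def, ← ofReal_norm]
      exact ENNReal.ofReal_le_ofReal (hB f hf)
    rw [EMetric.totallyBounded_iff]
    intro ε' hε'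
    obtain ⟨ε, hε, hεε'⟩ : ∃ ε : ℝ, 0 < ε ∧ ENNReal.ofReal ε ≤ ε' := by
      obtain ⟨ε, h0, h1⟩ := ENNReal.lt_iff_exists_real_btwn.1 hε'
      exact ⟨ε, ENNReal.ofReal_pos.1 h1.1, h1.2.le⟩
    have hε4 : 0 < ε / 2 / 2 := by positivity
    obtain ⟨e, he, -, hCe⟩ := hsmall (ε / 2 / 2) hε4
    obtain ⟨δ, hδ, hδF⟩ := h1 e he
    obtain ⟨E, hEb, hEF⟩ := h2 (ε / 2 / 2) hε4
    obtain ⟨R, hR, hER⟩ := hEb.subset_closedBall_lt 0 x0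
    set r := δ / 2 with hr
    have hr0 : 0 < r := by positivity
    obtain ⟨K, hK, hKF⟩ := kr_net hp' hball hdbl hsymm hr0 (N := ENNReal.ofReal B)
      ENNReal.ofReal_ne_top x0 hR hε4
    obtain ⟨t, ht, hKt⟩ := EMetric.totallyBounded_iff.1 hK.totallyBounded
      (ENNReal.ofReal (ε / 2 / 2)) (ENNReal.ofReal_pos.2 hε4)
    refine ⟨t, ht, fun f hf => ?_⟩
    obtain ⟨k, hk, hfk⟩ := hKF f (Lp.memLp f) (hN f hf)
    obtain ⟨g, hg, hkg⟩ := Set.mem_iUnion₂.1 (hKt hk)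
    refine Set.mem_iUnion₂.2 ⟨g, hg, ?_⟩
    rw [Metric.mem_eball] at hkg ⊢
    refine lt_of_lt_of_le ?_ hεε'
    have hAf := kr_memLp hp' hball hdbl (Lp.memLp f) hr0
    have hAAf := kr_memLp hp' hball hdbl hAf hr0
    set T := avg μ r (avg μ r f) with hT
    have hlt := hδF f hf r hr0 (by rw [hr]; linarith)
    have hTf : eLpNorm (T - ⇑f) p μ ≤ ENNReal.ofReal (ε / 2 / 2) := by
      have e1 : T - ⇑f = avg μ r (avg μ r f - ⇑f) + (avg μ r f - ⇑f) := by
        rw [kr_avg_sub hball hAf (Lp.memLp f) hr0]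
        simp [hT]
      rw [e1]
      refine (eLpNorm_add_le (kr_memLp hp' hball hdbl (hAf.sub (Lp.memLp f)) hr0).1
        (hAf.sub (Lp.memLp f)).1 hp1).trans ?_
      refine le_trans ?_ hCe
      rw [hC, add_mul, one_mul]
      exact add_le_add ((kr_bdd hp' hball hdbl (hAf.sub (Lp.memLp f)) hr0).trans
        (mul_le_mul_right hlt.le _)) hlt.le
    have hdist : edist f k ≤ ENNReal.ofReal (ε / 2 / 2) + ENNReal.ofReal (ε / 2 / 2) +
        ENNReal.ofReal (ε / 2 / 2) := by
      rw [Lp.edist_def]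
      have e2 : ⇑f - ⇑k = ((closedBall x0 R)ᶜ.indicator f + (closedBall x0 R).indicator (⇑f - T))
          + ((closedBall x0 R).indicator T - ⇑k) := by
        funext x
        by_cases hx : x ∈ closedBall x0 R
        · simp [Set.indicator, hx]
        · simp [Set.indicator, hx, sub_eq_add_neg]
      have m1 := (Lp.memLp f).1.indicator (measurableSet_closedBall (x := x0) (ε := R)).compl
      have m2 := ((Lp.memLp f).sub hAAf).1.indicator (measurableSet_closedBall (x := x0) (ε := R))
      have m3 := (hAAf.1.indicator (measurableSet_closedBall (x := x0) (ε := R))).sub (Lp.memLp k).1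
      rw [e2]
      refine (eLpNorm_add_le (m1.add m2) m3 hp1).trans (add_le_add ?_ hfk)
      refine (eLpNorm_add_le m1 m2 hp1).trans (add_le_add ?_ ?_)
      · refine le_trans (eLpNorm_mono fun x => ?_) (hEF f hf).le
        by_cases hx : x ∈ closedBall x0 R
        · rw [Set.indicator_of_notMem (by simpa using hx), norm_zero]
          exact norm_nonneg _
        · rw [Set.indicator_of_mem (by exact hx),
            Set.indicator_of_mem (by exact fun h => hx (hER h))]
      · refine (eLpNorm_indicator_le _).trans ?_
        rw [eLpNorm_sub_comm]
        exact hTf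
    calc edist f g ≤ edist f k + edist k g := edist_triangle _ _ _
      _ < (ENNReal.ofReal (ε / 2 / 2) + ENNReal.ofReal (ε / 2 / 2) +
        ENNReal.ofReal (ε / 2 / 2)) + ENNReal.ofReal (ε / 2 / 2) :=
          ENNReal.add_lt_add_of_le_of_lt (ne_top_of_le_ne_top (by simp) hdist) hdist hkg
      _ = ENNReal.ofReal ε := by
          rw [hhalf ε hε, hhalf (ε / 2) (by positivity)]
          ring
end
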